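/- arXiv:2605.19349 — 2 statements merged into one kernel-verified Lean document; each statement's English description precedes it below -/
import Mathlib

section
/- Let A be a GLD-lattice and let N be a GLD-filter frame of A. Then the map η from A to the powerset of the set of GLD-filters of A, given by η(x) = {F : F is a GLD-filter of A and x ∈ F}, is injective and satisfies: η(⊥) = ∅, η(⊤) = the set of all GLD-filters, η(x ⊔ y) = η(x) ∪ η(y), η(x ⊓ y) = η(x) ∩ η(y), η(□x) = □_Z η(x), and η(◇x) = ◇_Z η(x) for all x, y ∈ A. -/
/-!
Injectivity of `eta` is a prime filter theorem for GLD-filters. If `x ≰ y`, then, because `x` is the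
supremum of the `x ⊓ □ⁿ⊥` and `y` the infimum of the `y ⊔ ◇ᵐ⊤`, already `x ⊓ □ⁿ⊥ ≰ y ⊔ ◇ᵐ⊤` for
some `n` and `m`. A prime filter separating these two elements contains `x` and `□ⁿ⊥` and omits `y`
and `◇ᵐ⊤`. As `□ᵏ⊥` increases and `◇ᵏ⊤` decreases with `k`, it is a GLD-filter, witnessed by
`max n m`.
-/

/-- A GLD-lattice structure on a bounded distributive lattice `A`, given by the
modal operations `box` and `dia`. -/
structure IsGLDLattice {A : Type*} [DistribLattice A] [BoundedOrder A]
    (box dia : A → A) : Prop where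
  box_top : box ⊤ = ⊤
  dia_bot : dia ⊥ = ⊥
  box_sup_le : ∀ x y : A, box (x ⊔ y) ≤ box x ⊔ dia y
  inf_dia_le : ∀ x y : A, box x ⊓ dia y ≤ dia (x ⊓ y)
  dia_sup : ∀ x y : A, dia (x ⊔ y) = dia x ⊔ dia y
  box_inf : ∀ x y : A, box (x ⊓ y) = box x ⊓ box y
  dia_dia_le : ∀ x : A, dia (dia x) ≤ dia x
  box_le_box_box : ∀ x : A, box x ≤ box (box x)
  isLUB_inf_boxIter : ∀ x : A, IsLUB {y : A | ∃ n : ℕ, y = x ⊓ box^[n] ⊥} x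
  isGLB_sup_diaIter : ∀ x : A, IsGLB {y : A | ∃ n : ℕ, y = x ⊔ dia^[n] ⊤} x

/-- A GLD-filter of `A`: a prime filter `F` such that for some `n`,
`◇ⁿ⊤ ∉ F` and `□ⁿ⊥ ∈ F`. -/
structure IsGLDFilter {A : Type*} [DistribLattice A] [BoundedOrder A]
    (box dia : A → A) (F : Set A) : Prop where
  nonempty : F.Nonempty
  mem_of_le : ∀ x y : A, x ∈ F → x ≤ y → y ∈ F
  inf_mem : ∀ x y : A, x ∈ F → y ∈ F → x ⊓ y ∈ F
  bot_not_mem : ⊥ ∉ F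
  prime : ∀ x y : A, x ⊔ y ∈ F → x ∈ F ∨ y ∈ F
  gld : ∃ n : ℕ, dia^[n] ⊤ ∉ F ∧ box^[n] ⊥ ∈ F

/-- The type of GLD-filters of `A`. -/
def GLDFilter (A : Type*) [DistribLattice A] [BoundedOrder A] (box dia : A → A) :=
  {F : Set A // IsGLDFilter box dia F}

/-- `eta x` is the set of GLD-filters containing `x`. -/
def eta {A : Type*} [DistribLattice A] [BoundedOrder A] (box dia : A → A)
    (x : A) : Set (GLDFilter A box dia) :=
  {F | x ∈ F.1}

/-- A GLD-filter frame of `A`: each `N F` is a filter of the powerset of the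
set of GLD-filters, and the neighborhood conditions relating `N` to `box`,
`dia` and `eta` hold. -/
structure IsGLDFilterFrame {A : Type*} [DistribLattice A] [BoundedOrder A]
    (box dia : A → A)
    (N : GLDFilter A box dia → Set (Set (GLDFilter A box dia))) : Prop where
  nonempty : ∀ F, (N F).Nonempty
  mem_of_subset : ∀ F, ∀ X Y : Set (GLDFilter A box dia),
    X ∈ N F → X ⊆ Y → Y ∈ N F
  inter_mem : ∀ F, ∀ X Y : Set (GLDFilter A box dia),
    X ∈ N F → Y ∈ N F → X ∩ Y ∈ N F
  eta_mem : ∀ F x, box x ∈ F.1 → eta box dia x ∈ N F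
  compl_eta_mem : ∀ F x, dia x ∉ F.1 → (eta box dia x)ᶜ ∈ N F
  eta_not_mem : ∀ F x, box x ∉ F.1 → eta box dia x ∉ N F
  compl_eta_not_mem : ∀ F x, dia x ∈ F.1 → (eta box dia x)ᶜ ∉ N F

/-- The box operator on the powerset of the set of GLD-filters induced by a
neighborhood map `N`. -/
def boxZ {A : Type*} [DistribLattice A] [BoundedOrder A] (box dia : A → A)
    (N : GLDFilter A box dia → Set (Set (GLDFilter A box dia))) :
    Set (GLDFilter A box dia) → Set (GLDFilter A box dia) :=
  fun X => {F | X ∈ N F}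

/-- The diamond operator induced by a neighborhood map `N`. -/
def diaZ {A : Type*} [DistribLattice A] [BoundedOrder A] (box dia : A → A)
    (N : GLDFilter A box dia → Set (Set (GLDFilter A box dia))) :
    Set (GLDFilter A box dia) → Set (GLDFilter A box dia) :=
  fun X => (boxZ box dia N Xᶜ)ᶜ

/-- The canonical neighborhood map of a GLD-lattice. -/
def canonN {A : Type*} [DistribLattice A] [BoundedOrder A] (box dia : A → A)
    (F : GLDFilter A box dia) : Set (Set (GLDFilter A box dia)) :=
  {X | ∃ x y : A, box x ∈ F.1 ∧ dia y ∉ F.1 ∧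
    eta box dia x ∩ (eta box dia y)ᶜ ⊆ X}

section Order

variable {α : Type*}

lemma exists_not_le_of_isLUB_of_isGLB [Preorder α] {S T : Set α} {x y : α}
    (hx : IsLUB S x) (hy : IsGLB T y) (hxy : ¬ x ≤ y) :
    ∃ s ∈ S, ∃ t ∈ T, ¬ s ≤ t := by
  contrapose! hxy
  exact (isLUB_le_iff hx).2 fun s hs => (le_isGLB_iff hy).2 fun t ht => hxy s hs t ht

lemma exists_isPrime_mem_notMem_of_not_le [DistribLattice α] {a b : α} (hab : ¬ a ≤ b) :
    ∃ J : Order.Ideal α, J.IsPrime ∧ b ∈ J ∧ a ∉ J := by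
  have hdisj : Disjoint (Order.PFilter.principal a : Set α) (Order.Ideal.principal b : Set α) :=
    Set.disjoint_left.2 fun _ hac hcb => hab (le_trans hac hcb)
  obtain ⟨J, hJ, hbJ, haJ⟩ := DistribLattice.prime_ideal_of_disjoint_filter_ideal hdisj
  exact ⟨J, hJ, Order.Ideal.principal_le_iff.1 hbJ,
    Set.disjoint_left.1 haJ (Order.PFilter.mem_principal.2 le_rfl)⟩

end Order

section GLDFilter

variable {A : Type*} [DistribLattice A] [BoundedOrder A] {box dia : A → A}

lemma isGLDFilter_compl_of_isPrime {J : Order.Ideal A} (hJ : J.IsPrime) {n : ℕ}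
    (hdia : dia^[n] ⊤ ∈ J) (hbox : box^[n] ⊥ ∉ J) : IsGLDFilter box dia (J : Set A)ᶜ where
  nonempty := ⟨_, hbox⟩
  mem_of_le _ _ hx hxy hy := hx (J.lower hxy hy)
  inf_mem _ _ hx hy hxy := (hJ.mem_or_mem hxy).elim hx hy
  bot_not_mem h := h J.bot_mem
  prime _ _ hxy := not_and_or.1 fun h => hxy (J.sup_mem h.1 h.2)
  gld := ⟨n, fun h => h hdia, hbox⟩

/-- Approximation by iterates: the increasing chain `□ⁿ⊥` approximates every element from below by
meets, and the decreasing chain `◇ⁿ⊤` approximates it from above by joins. This is what makes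
GLD-filters separate points. -/
structure IsApproximatedByIterates (box dia : A → A) : Prop where
  monotone_boxIter : Monotone fun n : ℕ => box^[n] ⊥
  antitone_diaIter : Antitone fun n : ℕ => dia^[n] ⊤
  isLUB_inf_boxIter : ∀ x : A, IsLUB {y : A | ∃ n : ℕ, y = x ⊓ box^[n] ⊥} x
  isGLB_sup_diaIter : ∀ x : A, IsGLB {y : A | ∃ n : ℕ, y = x ⊔ dia^[n] ⊤} x

lemma IsGLDLattice.isApproximatedByIterates (h : IsGLDLattice box dia) :
    IsApproximatedByIterates box dia where
  monotone_boxIter := (Monotone.of_map_inf h.box_inf).monotone_iterate_of_le_map bot_le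
  antitone_diaIter := (Monotone.of_map_sup h.dia_sup).antitone_iterate_of_map_le le_top
  isLUB_inf_boxIter := h.isLUB_inf_boxIter
  isGLB_sup_diaIter := h.isGLB_sup_diaIter

lemma IsApproximatedByIterates.exists_gldFilter_mem_notMem
    (h : IsApproximatedByIterates box dia) {x y : A} (hxy : ¬ x ≤ y) :
    ∃ F : GLDFilter A box dia, x ∈ F.1 ∧ y ∉ F.1 := by
  obtain ⟨_, ⟨n, rfl⟩, _, ⟨m, rfl⟩, hnm⟩ := exists_not_le_of_isLUB_of_isGLB
    (h.isLUB_inf_boxIter x) (h.isGLB_sup_diaIter y) hxy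
  obtain ⟨J, hJ, hyJ, hxJ⟩ := exists_isPrime_mem_notMem_of_not_le hnm
  have hdia : dia^[max n m] ⊤ ∈ J :=
    J.lower ((h.antitone_diaIter (le_max_right n m)).trans le_sup_right) hyJ
  have hbox : box^[max n m] ⊥ ∉ J := fun hJbox =>
    hxJ (J.lower (inf_le_right.trans (h.monotone_boxIter (le_max_left n m))) hJbox)
  exact ⟨⟨(J : Set A)ᶜ, isGLDFilter_compl_of_isPrime hJ hdia hbox⟩,
    fun hx => hxJ (J.lower inf_le_left hx), fun hy => hy (J.lower le_sup_left hyJ)⟩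

lemma IsApproximatedByIterates.eta_subset_eta_iff (h : IsApproximatedByIterates box dia)
    {x y : A} : eta box dia x ⊆ eta box dia y ↔ x ≤ y := by
  refine ⟨fun hsub => ?_, fun hxy F hx => F.2.mem_of_le x y hx hxy⟩
  by_contra hxy
  obtain ⟨F, hx, hy⟩ := h.exists_gldFilter_mem_notMem hxy
  exact hy (hsub hx)

lemma IsApproximatedByIterates.eta_injective (h : IsApproximatedByIterates box dia) :
    Function.Injective (eta box dia) := fun _ _ heq =>
  le_antisymm (h.eta_subset_eta_iff.1 heq.subset) (h.eta_subset_eta_iff.1 heq.superset)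

variable (box dia)

lemma eta_bot : eta box dia (⊥ : A) = ∅ :=
  Set.eq_empty_of_forall_notMem fun F => F.2.bot_not_mem

lemma eta_top : eta box dia (⊤ : A) = Set.univ :=
  Set.eq_univ_of_forall fun F =>
    let ⟨a, ha⟩ := F.2.nonempty
    F.2.mem_of_le a ⊤ ha le_top

lemma eta_sup (x y : A) : eta box dia (x ⊔ y) = eta box dia x ∪ eta box dia y :=
  Set.ext fun F => ⟨F.2.prime x y, Or.rec
    (fun hx => F.2.mem_of_le x _ hx le_sup_left) (fun hy => F.2.mem_of_le y _ hy le_sup_right)⟩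

lemma eta_inf (x y : A) : eta box dia (x ⊓ y) = eta box dia x ∩ eta box dia y :=
  Set.ext fun F => ⟨
    fun hxy => ⟨F.2.mem_of_le _ x hxy inf_le_left, F.2.mem_of_le _ y hxy inf_le_right⟩,
    fun ⟨hx, hy⟩ => F.2.inf_mem x y hx hy⟩

end GLDFilter

section GLDFilterFrame

variable {A : Type*} [DistribLattice A] [BoundedOrder A] {box dia : A → A}
  {N : GLDFilter A box dia → Set (Set (GLDFilter A box dia))}

lemma IsGLDFilterFrame.box_mem_iff (hN : IsGLDFilterFrame box dia N) (F : GLDFilter A box dia)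
    (x : A) : box x ∈ F.1 ↔ eta box dia x ∈ N F :=
  ⟨hN.eta_mem F x, not_imp_not.1 (hN.eta_not_mem F x)⟩

lemma IsGLDFilterFrame.dia_mem_iff (hN : IsGLDFilterFrame box dia N) (F : GLDFilter A box dia)
    (x : A) : dia x ∈ F.1 ↔ (eta box dia x)ᶜ ∉ N F :=
  ⟨hN.compl_eta_not_mem F x, not_imp_comm.1 (hN.compl_eta_mem F x)⟩

end GLDFilterFrame

theorem stmt3_general {A : Type*} [DistribLattice A] [BoundedOrder A] (box dia : A → A)
    (h : IsApproximatedByIterates box dia)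
    (N : GLDFilter A box dia → Set (Set (GLDFilter A box dia)))
    (hbox : ∀ F x, box x ∈ F.1 ↔ eta box dia x ∈ N F)
    (hdia : ∀ F x, dia x ∈ F.1 ↔ (eta box dia x)ᶜ ∉ N F) :
    Function.Injective (eta box dia) ∧
    eta box dia (⊥ : A) = ∅ ∧
    eta box dia (⊤ : A) = Set.univ ∧
    (∀ x y : A, eta box dia (x ⊔ y) = eta box dia x ∪ eta box dia y) ∧
    (∀ x y : A, eta box dia (x ⊓ y) = eta box dia x ∩ eta box dia y) ∧
    (∀ x : A, eta box dia (box x) = boxZ box dia N (eta box dia x)) ∧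
    (∀ x : A, eta box dia (dia x) = diaZ box dia N (eta box dia x)) :=
  ⟨h.eta_injective, eta_bot box dia, eta_top box dia, eta_sup box dia, eta_inf box dia,
    fun x => Set.ext fun F => hbox F x, fun x => Set.ext fun F => hdia F x⟩

/-- For a GLD-lattice `A` and a GLD-filter frame `N` of `A`, the map `eta` is
an injective homomorphism of modal distributive lattices into the dual algebra
of the frame. -/
theorem stmt3 {A : Type*} [DistribLattice A] [BoundedOrder A] (box dia : A → A)
    (h : IsGLDLattice box dia)
    (N : GLDFilter A box dia → Set (Set (GLDFilter A box dia)))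
    (hN : IsGLDFilterFrame box dia N) :
    Function.Injective (eta box dia) ∧
    eta box dia (⊥ : A) = ∅ ∧
    eta box dia (⊤ : A) = Set.univ ∧
    (∀ x y : A, eta box dia (x ⊔ y) = eta box dia x ∪ eta box dia y) ∧
    (∀ x y : A, eta box dia (x ⊓ y) = eta box dia x ∩ eta box dia y) ∧
    (∀ x : A, eta box dia (box x) = boxZ box dia N (eta box dia x)) ∧
    (∀ x : A, eta box dia (dia x) = diaZ box dia N (eta box dia x)) :=
  stmt3_general box dia h.isApproximatedByIterates N hN.box_mem_iff hN.dia_mem_iff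
end

section
/- For all positive modal formulas φ and ψ, the sequent φ ⊢ ψ is provable in PGL⁺ if and only if v(φ) ≤ v(ψ) for every GLD-lattice A and every valuation v on A. -/
/-- Positive modal formulas, built from propositional variables and `⊥`, `⊤`
by `∨`, `∧`, `◇`, `□`. -/
inductive PosForm : Type
  | var : ℕ → PosForm
  | bot : PosForm
  | top : PosForm
  | or : PosForm → PosForm → PosForm
  | and : PosForm → PosForm → PosForm
  | dia : PosForm → PosForm
  | box : PosForm → PosForm

/-- The value of a positive modal formula in a bounded lattice equipped with
operations `box` and `dia`, under a valuation `v` of the variables. -/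
def PosForm.eval {A : Type*} [Lattice A] [BoundedOrder A]
    (box dia : A → A) (v : ℕ → A) : PosForm → A
  | .var p => v p
  | .bot => ⊥
  | .top => ⊤
  | .or φ ψ => PosForm.eval box dia v φ ⊔ PosForm.eval box dia v ψ
  | .and φ ψ => PosForm.eval box dia v φ ⊓ PosForm.eval box dia v ψ
  | .dia φ => dia (PosForm.eval box dia v φ)
  | .box φ => box (PosForm.eval box dia v φ)

/-- The proof system `PGL⁺` for sequents `φ ⊢ ψ` of positive modal formulas,
including the two `ω`-rules. -/
inductive PGL : PosForm → PosForm → Prop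
  | refl (φ : PosForm) : PGL φ φ
  | trans : ∀ {φ ψ χ : PosForm}, PGL φ ψ → PGL ψ χ → PGL φ χ
  | or_inl (φ ψ : PosForm) : PGL φ (.or φ ψ)
  | or_inr (φ ψ : PosForm) : PGL ψ (.or φ ψ)
  | or_elim : ∀ {φ ψ χ : PosForm}, PGL φ χ → PGL ψ χ → PGL (.or φ ψ) χ
  | and_left (φ ψ : PosForm) : PGL (.and φ ψ) φ
  | and_right (φ ψ : PosForm) : PGL (.and φ ψ) ψ
  | and_intro : ∀ {φ ψ χ : PosForm}, PGL χ φ → PGL χ ψ → PGL χ (.and φ ψ)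
  | distrib (φ ψ χ : PosForm) :
      PGL (.and φ (.or ψ χ)) (.or (.and φ ψ) (.and φ χ))
  | dia_mono : ∀ {φ ψ : PosForm}, PGL φ ψ → PGL (.dia φ) (.dia ψ)
  | box_mono : ∀ {φ ψ : PosForm}, PGL φ ψ → PGL (.box φ) (.box ψ)
  | dia_or (φ ψ : PosForm) : PGL (.dia (.or φ ψ)) (.or (.dia φ) (.dia ψ))
  | box_and (φ ψ : PosForm) : PGL (.and (.box φ) (.box ψ)) (.box (.and φ ψ))
  | dia_box (φ ψ : PosForm) : PGL (.and (.dia φ) (.box ψ)) (.dia (.and φ ψ))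
  | box_or (φ ψ : PosForm) : PGL (.box (.or φ ψ)) (.or (.box φ) (.dia ψ))
  | bot_le (φ : PosForm) : PGL .bot φ
  | le_top (φ : PosForm) : PGL φ .top
  | dia_bot : PGL (.dia .bot) .bot
  | box_top : PGL .top (.box .top)
  | dia_dia (φ : PosForm) : PGL (.dia (.dia φ)) (.dia φ)
  | box_box (φ : PosForm) : PGL (.box φ) (.box (.box φ))
  | gld_box : ∀ {φ ψ : PosForm},
      (∀ n : ℕ, PGL (.and ψ (PosForm.box^[n] .bot)) φ) → PGL ψ φ
  | gld_dia : ∀ {φ ψ : PosForm},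
      (∀ n : ℕ, PGL φ (.or ψ (PosForm.dia^[n] .top))) → PGL φ ψ

/-!
An axiom or rule of `PGL⁺` is a law of GLD-lattices read as a sequent. The `ω`-rules correspond to
the two limit conditions: `x` is the least upper bound of the `x ⊓ □ⁿ⊥` precisely when every common
upper bound of these elements is above `x`, since `x` itself always is an upper bound. Soundness is
therefore an induction on derivations. For completeness, formulas preordered by derivability
collapse to a GLD-lattice in which every formula, evaluated at the classes of the variables, is its
own class, so that an inequality there is a derivation.
-/

section Order

variable {α : Type*} {ι : Sort*}

theorem isLUB_setOf_inf_iff [SemilatticeInf α] {f : ι → α} {x : α} :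
    IsLUB {y | ∃ i, y = x ⊓ f i} x ↔ ∀ u, (∀ i, x ⊓ f i ≤ u) → x ≤ u := by
  refine ⟨fun h u hu => h.2 ?_, fun h => ⟨?_, fun u hu => h u fun i => hu ⟨i, rfl⟩⟩⟩
  · rintro _ ⟨i, rfl⟩
    exact hu i
  · rintro _ ⟨i, rfl⟩
    exact inf_le_left

theorem isGLB_setOf_sup_iff [SemilatticeSup α] {f : ι → α} {x : α} :
    IsGLB {y | ∃ i, y = x ⊔ f i} x ↔ ∀ u, (∀ i, u ≤ x ⊔ f i) → u ≤ x :=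
  isLUB_setOf_inf_iff (α := αᵒᵈ)

end Order

section Iterate

variable {A : Type*} [Lattice A] [BoundedOrder A] {box dia : A → A}

theorem PosForm.eval_box_iterate (v : ℕ → A) (φ : PosForm) (n : ℕ) :
    PosForm.eval box dia v (PosForm.box^[n] φ) = box^[n] (PosForm.eval box dia v φ) :=
  Function.Semiconj.iterate_right (f := PosForm.eval box dia v) (fun _ => rfl) n φ

theorem PosForm.eval_dia_iterate (v : ℕ → A) (φ : PosForm) (n : ℕ) :
    PosForm.eval box dia v (PosForm.dia^[n] φ) = dia^[n] (PosForm.eval box dia v φ) :=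
  Function.Semiconj.iterate_right (f := PosForm.eval box dia v) (fun _ => rfl) n φ

end Iterate

namespace IsGLDLattice

variable {A : Type*} [DistribLattice A] [BoundedOrder A] {box dia : A → A}

theorem box_mono (h : IsGLDLattice box dia) : Monotone box := .of_map_inf h.box_inf

theorem dia_mono (h : IsGLDLattice box dia) : Monotone dia := .of_map_sup h.dia_sup

theorem le_of_forall_inf_box_iterate_le (h : IsGLDLattice box dia) {x y : A}
    (hxy : ∀ n : ℕ, x ⊓ box^[n] ⊥ ≤ y) : x ≤ y :=
  isLUB_setOf_inf_iff.1 (h.isLUB_inf_boxIter x) y hxy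

theorem le_of_forall_le_sup_dia_iterate (h : IsGLDLattice box dia) {x y : A}
    (hxy : ∀ n : ℕ, x ≤ y ⊔ dia^[n] ⊤) : x ≤ y :=
  isGLB_setOf_sup_iff.1 (h.isGLB_sup_diaIter y) x hxy

end IsGLDLattice

namespace PGL

variable {φ φ' ψ ψ' : PosForm}

theorem eval_le_eval {A : Type*} [DistribLattice A] [BoundedOrder A] {box dia : A → A}
    (h : IsGLDLattice box dia) (v : ℕ → A) (d : PGL φ ψ) :
    PosForm.eval box dia v φ ≤ PosForm.eval box dia v ψ := by
  induction d with
  | refl => exact le_rfl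
  | trans _ _ h₁ h₂ => exact h₁.trans h₂
  | or_inl => exact le_sup_left
  | or_inr => exact le_sup_right
  | or_elim _ _ h₁ h₂ => exact sup_le h₁ h₂
  | and_left => exact inf_le_left
  | and_right => exact inf_le_right
  | and_intro _ _ h₁ h₂ => exact le_inf h₁ h₂
  | distrib => exact (inf_sup_left _ _ _).le
  | dia_mono _ h₁ => exact h.dia_mono h₁
  | box_mono _ h₁ => exact h.box_mono h₁
  | dia_or => exact (h.dia_sup _ _).le
  | box_and => exact (h.box_inf _ _).ge
  | dia_box φ ψ => simpa only [PosForm.eval, inf_comm] using h.inf_dia_le (ψ.eval box dia v) _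
  | box_or => exact h.box_sup_le _ _
  | bot_le => exact _root_.bot_le
  | le_top => exact _root_.le_top
  | dia_bot => exact h.dia_bot.le
  | box_top => exact h.box_top.ge
  | dia_dia => exact h.dia_dia_le _
  | box_box => exact h.box_le_box_box _
  | gld_box _ ih =>
    refine h.le_of_forall_inf_box_iterate_le fun n => ?_
    simpa only [PosForm.eval, PosForm.eval_box_iterate] using ih n
  | gld_dia _ ih =>
    refine h.le_of_forall_le_sup_dia_iterate fun n => ?_
    simpa only [PosForm.eval, PosForm.eval_dia_iterate] using ih n

theorem and_mono (h : PGL φ φ') (k : PGL ψ ψ') : PGL (.and φ ψ) (.and φ' ψ') :=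
  .and_intro (.trans (.and_left _ _) h) (.trans (.and_right _ _) k)

theorem or_mono (h : PGL φ φ') (k : PGL ψ ψ') : PGL (.or φ ψ) (.or φ' ψ') :=
  .or_elim (.trans h (.or_inl _ _)) (.trans k (.or_inr _ _))

theorem and_swap (φ ψ : PosForm) : PGL (.and φ ψ) (.and ψ φ) :=
  .and_intro (.and_right _ _) (.and_left _ _)

theorem box_dia (φ ψ : PosForm) : PGL (.and (.box φ) (.dia ψ)) (.dia (.and φ ψ)) :=
  (and_swap _ _).trans <| (dia_box ψ φ).trans (dia_mono (and_swap _ _))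

end PGL

instance : Preorder PosForm where
  le := PGL
  le_refl := .refl
  le_trans _ _ _ := .trans

/-- The Lindenbaum algebra of `PGL⁺`: formulas modulo interderivability, ordered by derivability. -/
abbrev Lindenbaum : Type := Antisymmetrization PosForm (· ≤ ·)

namespace Lindenbaum

/-- The class of a formula in the Lindenbaum algebra; `mk ∘ .var` is the canonical valuation. -/
abbrev mk (φ : PosForm) : Lindenbaum := toAntisymmetrization (· ≤ ·) φ

theorem mk_surjective : Function.Surjective mk := Quotient.mk_surjective

theorem mk_le_mk {φ ψ : PosForm} : mk φ ≤ mk ψ ↔ PGL φ ψ := Iff.rfl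

instance : Lattice Lindenbaum where
  sup := Quotient.map₂ PosForm.or fun _ _ h _ _ k => ⟨h.1.or_mono k.1, h.2.or_mono k.2⟩
  inf := Quotient.map₂ PosForm.and fun _ _ h _ _ k => ⟨h.1.and_mono k.1, h.2.and_mono k.2⟩
  le_sup_left := mk_surjective.forall₂.2 PGL.or_inl
  le_sup_right := mk_surjective.forall₂.2 PGL.or_inr
  sup_le := mk_surjective.forall₃.2 fun _ _ _ => PGL.or_elim
  inf_le_left := mk_surjective.forall₂.2 PGL.and_left
  inf_le_right := mk_surjective.forall₂.2 PGL.and_right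
  le_inf := mk_surjective.forall₃.2 fun _ _ _ => PGL.and_intro

instance : DistribLattice Lindenbaum := .ofInfSupLe (mk_surjective.forall₃.2 PGL.distrib)

instance : BoundedOrder Lindenbaum where
  top := mk .top
  bot := mk .bot
  le_top := mk_surjective.forall.2 PGL.le_top
  bot_le := mk_surjective.forall.2 PGL.bot_le

/-- The operation `□` of the Lindenbaum algebra. -/
def box : Lindenbaum → Lindenbaum :=
  OrderHom.antisymmetrization ⟨PosForm.box, fun _ _ => PGL.box_mono⟩

/-- The operation `◇` of the Lindenbaum algebra. -/
def dia : Lindenbaum → Lindenbaum :=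
  OrderHom.antisymmetrization ⟨PosForm.dia, fun _ _ => PGL.dia_mono⟩

theorem eval_mk_var (φ : PosForm) : PosForm.eval box dia (fun p => mk (.var p)) φ = mk φ := by
  induction φ with
  | var | bot | top => rfl
  | or φ ψ hφ hψ | and φ ψ hφ hψ => rw [PosForm.eval, hφ, hψ]; rfl
  | dia φ hφ | box φ hφ => rw [PosForm.eval, hφ]; rfl

theorem mk_and_box_iterate_bot (φ : PosForm) (n : ℕ) :
    mk (.and φ (PosForm.box^[n] .bot)) = mk φ ⊓ box^[n] ⊥ := by
  rw [← eval_mk_var, PosForm.eval, eval_mk_var, PosForm.eval_box_iterate, PosForm.eval]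

theorem mk_or_dia_iterate_top (φ : PosForm) (n : ℕ) :
    mk (.or φ (PosForm.dia^[n] .top)) = mk φ ⊔ dia^[n] ⊤ := by
  rw [← eval_mk_var, PosForm.eval, eval_mk_var, PosForm.eval_dia_iterate, PosForm.eval]

theorem le_of_forall_inf_box_iterate_le :
    ∀ x y : Lindenbaum, (∀ n : ℕ, x ⊓ box^[n] ⊥ ≤ y) → x ≤ y :=
  mk_surjective.forall₂.2 fun φ _ h => mk_le_mk.2 <| PGL.gld_box fun n =>
    mk_le_mk.1 <| (mk_and_box_iterate_bot φ n).trans_le (h n)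

theorem le_of_forall_le_sup_dia_iterate :
    ∀ x y : Lindenbaum, (∀ n : ℕ, y ≤ x ⊔ dia^[n] ⊤) → y ≤ x :=
  mk_surjective.forall₂.2 fun φ _ h => mk_le_mk.2 <| PGL.gld_dia fun n =>
    mk_le_mk.1 <| (h n).trans_eq (mk_or_dia_iterate_top φ n).symm

theorem isGLDLattice : IsGLDLattice box dia where
  box_top := top_unique (mk_le_mk.2 PGL.box_top)
  dia_bot := bot_unique (mk_le_mk.2 PGL.dia_bot)
  box_sup_le := mk_surjective.forall₂.2 PGL.box_or
  inf_dia_le := mk_surjective.forall₂.2 PGL.box_dia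
  dia_sup := mk_surjective.forall₂.2 fun φ ψ => le_antisymm
    (mk_le_mk.2 (PGL.dia_or φ ψ))
    (sup_le (mk_le_mk.2 (PGL.dia_mono (.or_inl φ ψ)))
      (mk_le_mk.2 (PGL.dia_mono (.or_inr φ ψ))))
  box_inf := mk_surjective.forall₂.2 fun φ ψ => le_antisymm
    (le_inf (mk_le_mk.2 (PGL.box_mono (.and_left φ ψ)))
      (mk_le_mk.2 (PGL.box_mono (.and_right φ ψ))))
    (mk_le_mk.2 (PGL.box_and φ ψ))
  dia_dia_le := mk_surjective.forall.2 PGL.dia_dia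
  box_le_box_box := mk_surjective.forall.2 PGL.box_box
  isLUB_inf_boxIter x := isLUB_setOf_inf_iff.2 (le_of_forall_inf_box_iterate_le x)
  isGLB_sup_diaIter x := isGLB_setOf_sup_iff.2 (le_of_forall_le_sup_dia_iterate x)

end Lindenbaum

/-- Soundness and completeness of `PGL⁺` with respect to the class of all
GLD-lattices: `φ ⊢ ψ` is provable iff `v(φ) ≤ v(ψ)` for every GLD-lattice and
every valuation. -/
theorem stmt13 (φ ψ : PosForm) :
    PGL φ ψ ↔
    (∀ (A : Type) [DistribLattice A] [BoundedOrder A], ∀ box dia : A → A,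
      IsGLDLattice box dia →
      ∀ v : ℕ → A, PosForm.eval box dia v φ ≤ PosForm.eval box dia v ψ) := by
  refine ⟨fun d A _ _ box dia h v => d.eval_le_eval h v, fun h => ?_⟩
  have hle := h Lindenbaum Lindenbaum.box Lindenbaum.dia Lindenbaum.isGLDLattice
    fun p => Lindenbaum.mk (.var p)
  rwa [Lindenbaum.eval_mk_var, Lindenbaum.eval_mk_var, Lindenbaum.mk_le_mk] at hle
end
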